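/- Let d ≥ 1, T > 0, σ > 0. Let V : ℝ^d × [0,T] → ℝ be bounded and measurable, and let u₀ : ℝ^d → ℝ be bounded and continuous. Then there exists exactly one bounded measurable function u : ℝ^d × [0,T] → ℝ such that u(x,0) = u₀(x) for all x and, for all x ∈ ℝ^d and t ∈ (0,T], u satisfies the mild (Duhamel) formulation of the heat equation ∂u/∂t = (σ²/2) Δu + V u: u(x,t) = ∫_{ℝ^d} G_t(x−y) u₀(y) dy + ∫₀ᵗ ∫_{ℝ^d} G_{t−s}(x−y) V(y,s) u(y,s) dy ds, where G_t(x) := (2πσ²t)^{−d/2} e^{−|x|²/(2σ²t)} is the heat kernel. -/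

import Mathlib

/-!
Since the heat kernel is a probability density, the Duhamel operator
`K f (x, t) = ∫₀ᵗ G_{t-s} * f(·, s) ds` sends a measurable function bounded by `A sⁿ` on `[0, T]`
to one bounded by `A tⁿ⁺¹ / (n + 1)` (`duhamel_bound`). With `h` the free evolution of `u₀` and
`|V| ≤ C`, being a mild solution means `u = h + K (V u)` on `[0, T]` (`mild_iff`).

Existence: the terms of the Picard series `∑ₙ (K V)ⁿ h` are bounded by `M (C t)ⁿ / n!`, so the
series converges uniformly to a bounded measurable function, which solves the equation because
`K` is continuous for uniform convergence (`exists_fixedPoint`). Uniqueness: the difference `D` of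
two bounded solutions satisfies `D = K (V D)`, hence is bounded by `R (C t)ⁿ / n!` for all `n`
and vanishes (`fixedPoint_unique`).
-/

open scoped BigOperators
open MeasureTheory

/-- The heat kernel `G_t(x) = (2πσ²t)^{-d/2} e^{-|x|²/(2σ²t)}` of the equation
`∂u/∂t = (σ²/2)Δu` on `ℝ^d`. -/
noncomputable def heatKernel (d : ℕ) (σ : ℝ) (t : ℝ)
    (x : EuclideanSpace ℝ (Fin d)) : ℝ :=
  (2 * Real.pi * σ ^ 2 * t) ^ (-(d : ℝ) / 2) *
    Real.exp (-‖x‖ ^ 2 / (2 * σ ^ 2 * t))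

open Set Filter Topology

namespace HeatMild

variable {d : ℕ} {σ : ℝ}

local notation "E" => EuclideanSpace ℝ (Fin d)

/-! ### The heat kernel as a probability density -/

lemma heatKernel_nonneg {t : ℝ} (ht : 0 ≤ t) (x : E) : 0 ≤ heatKernel d σ t x := by
  unfold heatKernel
  positivity

lemma heatKernel_zero (hd : 1 ≤ d) (x : E) : heatKernel d σ 0 x = 0 := by
  have : -(d : ℝ) / 2 ≠ 0 := by
    have : (1 : ℝ) ≤ d := by exact_mod_cast hd
    intro h; linarith
  simp [heatKernel, Real.zero_rpow this]

lemma measurable_heatKernel : Measurable (fun p : ℝ × E => heatKernel d σ p.1 p.2) := by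
  unfold heatKernel
  fun_prop

lemma integral_heatKernel (hσ : 0 < σ) {t : ℝ} (ht : 0 < t) :
    ∫ y : E, heatKernel d σ t y = 1 := by
  have hpos : 0 < 2 * σ ^ 2 * t := by positivity
  have h := GaussianFourier.integral_rexp_neg_mul_sq_norm (V := E) (b := 1 / (2 * σ ^ 2 * t))
    (by positivity)
  unfold heatKernel
  rw [integral_const_mul]
  have e : (fun v : E => Real.exp (-‖v‖ ^ 2 / (2 * σ ^ 2 * t))) =
      fun v : E => Real.exp (-(1 / (2 * σ ^ 2 * t)) * ‖v‖ ^ 2) := by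
    funext v; congr 1; ring
  rw [e, h, finrank_euclideanSpace_fin,
    show Real.pi / (1 / (2 * σ ^ 2 * t)) = 2 * Real.pi * σ ^ 2 * t by field_simp,
    ← Real.rpow_add (by positivity)]
  simp [neg_div]

lemma integrable_heatKernel (hσ : 0 < σ) {t : ℝ} (ht : 0 < t) :
    Integrable (fun y : E => heatKernel d σ t y) := by
  by_contra h
  have := integral_heatKernel (d := d) hσ ht
  rw [integral_undef h] at this
  exact zero_ne_one this

/-- Convolution with the heat kernel is a contraction for the sup norm. The case `t = 0` holds
because the kernel as defined vanishes there (`d ≥ 1`). -/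
lemma conv_bound (hd : 1 ≤ d) (hσ : 0 < σ) {t : ℝ} (ht : 0 ≤ t) {f : E → ℝ} (hf : Measurable f)
    {b : ℝ} (hb : ∀ y, |f y| ≤ b) (x : E) :
    Integrable (fun y => heatKernel d σ t (x - y) * f y) ∧
      |∫ y, heatKernel d σ t (x - y) * f y| ≤ b := by
  rcases ht.eq_or_lt with rfl | ht
  · simpa [heatKernel_zero hd] using (abs_nonneg _).trans (hb 0)
  have hi : Integrable (fun y => heatKernel d σ t (x - y)) :=
    (integrable_heatKernel hσ ht).comp_sub_left x
  refine ⟨hi.mul_bdd hf.aestronglyMeasurable (.of_forall hb), ?_⟩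
  have h1 : ∫ y, heatKernel d σ t (x - y) * b = b := by
    rw [integral_mul_const, integral_sub_left_eq_self (fun y => heatKernel d σ t y),
      integral_heatKernel hσ ht, one_mul]
  rw [← h1, ← Real.norm_eq_abs]
  refine norm_integral_le_of_norm_le (hi.mul_const b) (.of_forall fun y => ?_)
  rw [norm_mul, Real.norm_of_nonneg (heatKernel_nonneg ht.le _)]
  exact mul_le_mul_of_nonneg_left (hb y) (heatKernel_nonneg ht.le _)

/-! ### The Duhamel operator -/

/-- The Duhamel operator `f ↦ ∫₀ᵗ G_{t-s} * f(·, s) ds`. -/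
noncomputable def duhamel (d : ℕ) (σ : ℝ) (f : EuclideanSpace ℝ (Fin d) → ℝ → ℝ)
    (x : EuclideanSpace ℝ (Fin d)) (t : ℝ) : ℝ :=
  ∫ s in (0 : ℝ)..t, ∫ y, heatKernel d σ (t - s) (x - y) * f y s

lemma measurable_inner {f : E → ℝ → ℝ} (hf : Measurable (Function.uncurry f)) :
    Measurable (fun p : (E × ℝ) × ℝ =>
      ∫ y, heatKernel d σ (p.1.2 - p.2) (p.1.1 - y) * f y p.2) := by
  have : StronglyMeasurable (fun q : ((E × ℝ) × ℝ) × E =>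
      heatKernel d σ (q.1.1.2 - q.1.2) (q.1.1.1 - q.2) * f q.2 q.1.2) := by
    apply Measurable.stronglyMeasurable
    apply Measurable.mul
    · exact measurable_heatKernel.comp
        (f := fun q : ((E × ℝ) × ℝ) × E => (q.1.1.2 - q.1.2, q.1.1.1 - q.2)) (by fun_prop)
    · exact hf.comp (f := fun q : ((E × ℝ) × ℝ) × E => (q.2, q.1.2)) (by fun_prop)
  exact this.integral_prod_right.measurable

lemma measurable_duhamel {f : E → ℝ → ℝ} (hf : Measurable (Function.uncurry f)) :
    Measurable (Function.uncurry (duhamel d σ f)) := by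
  have hm := measurable_inner (σ := σ) hf
  have key : ∀ S : Set ((E × ℝ) × ℝ), MeasurableSet S → Measurable (fun p : E × ℝ =>
      ∫ s, S.indicator (fun p : (E × ℝ) × ℝ =>
        ∫ y, heatKernel d σ (p.1.2 - p.2) (p.1.1 - y) * f y p.2) (p, s)) := fun S hS =>
    (hm.indicator hS).stronglyMeasurable.integral_prod_right'.measurable
  have h1 := key {q | 0 < q.2 ∧ q.2 ≤ q.1.2} (by measurability)
  have h2 := key {q | q.1.2 < q.2 ∧ q.2 ≤ 0} (by measurability)
  convert h1.sub h2 using 1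
  funext p
  rw [Function.uncurry, duhamel, intervalIntegral, ← integral_indicator measurableSet_Ioc,
    ← integral_indicator measurableSet_Ioc]
  rfl

/-- Each application of the Duhamel operator gains one power of `t`. -/
lemma duhamel_bound (hd : 1 ≤ d) (hσ : 0 < σ) {T : ℝ} {f : E → ℝ → ℝ}
    (hf : Measurable (Function.uncurry f)) {A : ℝ} {n : ℕ}
    (hb : ∀ y, ∀ s ∈ Icc 0 T, |f y s| ≤ A * s ^ n) (x : E) {t : ℝ} (ht : t ∈ Icc 0 T) :
    IntervalIntegrable (fun s => ∫ y, heatKernel d σ (t - s) (x - y) * f y s) volume 0 t ∧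
      |duhamel d σ f x t| ≤ A * (t ^ (n + 1) / (n + 1)) := by
  have hbd : ∀ s ∈ Ioc 0 t, ‖∫ y, heatKernel d σ (t - s) (x - y) * f y s‖ ≤ A * s ^ n :=
    fun s hs => (conv_bound hd hσ (sub_nonneg.2 hs.2)
      (hf.comp (f := fun y => (y, s)) (by fun_prop))
      (fun y => hb y s ⟨hs.1.le, hs.2.trans ht.2⟩) x).2
  have hg : IntervalIntegrable (fun s : ℝ => A * s ^ n) volume 0 t :=
    (by fun_prop : Continuous fun s : ℝ => A * s ^ n).intervalIntegrable _ _
  constructor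
  · refine hg.mono_fun' ?_ ?_
    · exact ((measurable_inner (σ := σ) hf).comp
        (f := fun s : ℝ => ((x, t), s)) (by fun_prop)).aestronglyMeasurable
    · rw [uIoc_of_le ht.1]
      exact (ae_restrict_iff' measurableSet_Ioc).2 (.of_forall hbd)
  · have := intervalIntegral.norm_integral_le_of_norm_le ht.1 (.of_forall hbd) hg
    rw [intervalIntegral.integral_const_mul, integral_pow] at this
    simpa [duhamel] using this

lemma duhamel_sub (hd : 1 ≤ d) (hσ : 0 < σ) {T : ℝ} {f g : E → ℝ → ℝ}
    (hf : Measurable (Function.uncurry f)) (hg : Measurable (Function.uncurry g)) {A B : ℝ}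
    (hA : ∀ y, ∀ s ∈ Icc 0 T, |f y s| ≤ A) (hB : ∀ y, ∀ s ∈ Icc 0 T, |g y s| ≤ B)
    (x : E) {t : ℝ} (ht : t ∈ Icc 0 T) :
    duhamel d σ (fun y s => f y s - g y s) x t = duhamel d σ f x t - duhamel d σ g x t := by
  have h1 := (duhamel_bound (n := 0) hd hσ hf (by simpa using hA) x ht).1
  have h2 := (duhamel_bound (n := 0) hd hσ hg (by simpa using hB) x ht).1
  rw [duhamel, duhamel, duhamel, ← intervalIntegral.integral_sub h1 h2]
  refine intervalIntegral.integral_congr fun s hs => ?_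
  rw [uIcc_of_le ht.1] at hs
  have hs' : s ∈ Icc 0 T := ⟨hs.1, hs.2.trans ht.2⟩
  rw [← integral_sub
    (conv_bound hd hσ (sub_nonneg.2 hs.2) (f := fun y => f y s)
      (hf.comp (f := fun y => (y, s)) (by fun_prop))
      (fun y => hA y s hs') x).1
    (conv_bound hd hσ (sub_nonneg.2 hs.2) (f := fun y => g y s)
      (hg.comp (f := fun y => (y, s)) (by fun_prop))
      (fun y => hB y s hs') x).1]
  simp only [mul_sub]

/-- The inductive step of the factorial bounds behind both the convergence of the Picard series
and uniqueness. -/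
lemma duhamel_step (hd : 1 ≤ d) (hσ : 0 < σ) {T : ℝ} {V : E → ℝ → ℝ}
    (hV : Measurable (Function.uncurry V)) {C : ℝ} (hC : ∀ x, ∀ t ∈ Icc 0 T, |V x t| ≤ C)
    {w : E → ℝ → ℝ} (hw : Measurable (Function.uncurry w)) {R : ℝ} {n : ℕ}
    (hb : ∀ x, ∀ t ∈ Icc 0 T, |w x t| ≤ R * ((C * t) ^ n / n.factorial))
    (x : E) {t : ℝ} (ht : t ∈ Icc 0 T) :
    |duhamel d σ (fun y s => V y s * w y s) x t| ≤
      R * ((C * t) ^ (n + 1) / (n + 1).factorial) := by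
  have h := (duhamel_bound hd hσ (f := fun y s => V y s * w y s) (hV.mul hw)
    (A := R * C ^ (n + 1) / n.factorial) (n := n) (T := T) (fun y s hs => ?_) x ht).2
  · refine h.trans (le_of_eq ?_)
    rw [Nat.factorial_succ]
    push_cast
    rw [mul_pow]
    field_simp
  · rw [abs_mul]
    calc |V y s| * |w y s| ≤ C * (R * ((C * s) ^ n / n.factorial)) :=
          mul_le_mul (hC y s hs) (hb y s hs) (abs_nonneg _) ((abs_nonneg _).trans (hC y s hs))
      _ = _ := by rw [mul_pow]; ring

/-! ### The Picard series -/

/-- The terms of the Picard (Dyson) series `∑ₙ (f ↦ duhamel (V f))ⁿ h`, cut off to vanish for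
`t ∉ [0, T]`, so that the series converges everywhere. -/
noncomputable def picardTerm (d : ℕ) (σ T : ℝ) (V h : EuclideanSpace ℝ (Fin d) → ℝ → ℝ) :
    ℕ → EuclideanSpace ℝ (Fin d) → ℝ → ℝ
  | 0 => h
  | n + 1 => fun x t =>
      if t ∈ Icc 0 T then duhamel d σ (fun y s => V y s * picardTerm d σ T V h n y s) x t else 0

lemma measurable_picardTerm {T : ℝ} {V h : E → ℝ → ℝ}
    (hV : Measurable (Function.uncurry V)) (hh : Measurable (Function.uncurry h)) (n : ℕ) :
    Measurable (Function.uncurry (picardTerm d σ T V h n)) := by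
  induction n with
  | zero => exact hh
  | succ n ih =>
    refine Measurable.ite (p := fun p : E × ℝ => p.2 ∈ Icc 0 T)
      (measurable_snd measurableSet_Icc) ?_ measurable_const
    exact measurable_duhamel (f := fun y s => V y s * picardTerm d σ T V h n y s) (hV.mul ih)

lemma picardTerm_bound (hd : 1 ≤ d) (hσ : 0 < σ) {T : ℝ} {V h : E → ℝ → ℝ}
    (hV : Measurable (Function.uncurry V)) (hh : Measurable (Function.uncurry h))
    {C : ℝ} (hC : ∀ x, ∀ t ∈ Icc 0 T, |V x t| ≤ C)
    {M : ℝ} (hM : ∀ x, ∀ t ∈ Icc 0 T, |h x t| ≤ M) (n : ℕ) :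
    ∀ x, ∀ t ∈ Icc 0 T,
      |picardTerm d σ T V h n x t| ≤ M * ((C * t) ^ n / n.factorial) := by
  induction n with
  | zero => simpa [picardTerm] using hM
  | succ n ih =>
    intro x t ht
    simp only [picardTerm, if_pos ht]
    exact duhamel_step hd hσ hV hC (measurable_picardTerm hV hh n) ih x ht

lemma picardTerm_eq_zero {T : ℝ} {V h : E → ℝ → ℝ} (h0 : ∀ x, ∀ t ∉ Icc 0 T, h x t = 0)
    (n : ℕ) (x : E) {t : ℝ} (ht : t ∉ Icc 0 T) : picardTerm d σ T V h n x t = 0 := by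
  cases n with
  | zero => exact h0 x t ht
  | succ n => simp only [picardTerm, if_neg ht]

lemma duhamel_partialSum (hd : 1 ≤ d) (hσ : 0 < σ) {T : ℝ} {V h : E → ℝ → ℝ}
    (hV : Measurable (Function.uncurry V)) (hh : Measurable (Function.uncurry h))
    {C : ℝ} (hC : ∀ x, ∀ t ∈ Icc 0 T, |V x t| ≤ C)
    {a : ℕ → ℝ} (ha : ∀ n x, ∀ t ∈ Icc 0 T, |picardTerm d σ T V h n x t| ≤ a n)
    (N : ℕ) (x : E) {t : ℝ} (ht : t ∈ Icc 0 T) :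
    ∑ n ∈ Finset.range (N + 1), picardTerm d σ T V h n x t =
      h x t + duhamel d σ
        (fun y s => V y s * ∑ n ∈ Finset.range N, picardTerm d σ T V h n y s) x t := by
  induction N with
  | zero => simp [picardTerm, duhamel]
  | succ N ih =>
    have hS : ∀ K, Measurable (Function.uncurry fun y s =>
        V y s * ∑ n ∈ Finset.range K, picardTerm d σ T V h n y s) := fun K =>
      hV.mul (Finset.measurable_fun_sum _ fun n _ => measurable_picardTerm hV hh n)
    have hSb : ∀ K, ∀ y, ∀ s ∈ Icc 0 T,
        |V y s * ∑ n ∈ Finset.range K, picardTerm d σ T V h n y s| ≤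
          C * ∑ n ∈ Finset.range K, a n := fun K y s hs => by
      rw [abs_mul]
      refine mul_le_mul (hC y s hs) ?_ (abs_nonneg _) ((abs_nonneg _).trans (hC y s hs))
      exact (Finset.abs_sum_le_sum_abs _ _).trans (Finset.sum_le_sum fun n _ => ha n y s hs)
    have := duhamel_sub hd hσ (hS (N + 1)) (hS N) (hSb (N + 1)) (hSb N) x ht
    rw [Finset.sum_range_succ, ih]
    simp only [picardTerm, if_pos ht]
    have e : (fun y s => V y s * ∑ n ∈ Finset.range (N + 1), picardTerm d σ T V h n y s -
        V y s * ∑ n ∈ Finset.range N, picardTerm d σ T V h n y s) =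
        fun y s => V y s * picardTerm d σ T V h N y s := by
      funext y s
      rw [Finset.sum_range_succ]; ring
    rw [e] at this
    rw [this]; ring

/-- The sum of the Picard series solves `u = h + duhamel (V u)` on `[0, T]`. -/
lemma exists_fixedPoint (hd : 1 ≤ d) (hσ : 0 < σ) {T : ℝ} (hT : 0 < T) {V h : E → ℝ → ℝ}
    (hV : Measurable (Function.uncurry V)) (hh : Measurable (Function.uncurry h))
    {C : ℝ} (hC : ∀ x, ∀ t ∈ Icc 0 T, |V x t| ≤ C)
    {M : ℝ} (hM : ∀ x, ∀ t ∈ Icc 0 T, |h x t| ≤ M) (h0 : ∀ x, ∀ t ∉ Icc 0 T, h x t = 0) :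
    ∃ u : E → ℝ → ℝ, Measurable (Function.uncurry u) ∧
      (∃ B : ℝ, ∀ x, ∀ t ∈ Icc 0 T, |u x t| ≤ B) ∧
      ∀ x, ∀ t ∈ Icc 0 T, u x t = h x t + duhamel d σ (fun y s => V y s * u y s) x t := by
  have hT0 : (0 : ℝ) ∈ Icc 0 T := ⟨le_rfl, hT.le⟩
  have hC0 : 0 ≤ C := (abs_nonneg _).trans (hC 0 0 hT0)
  have hM0 : 0 ≤ M := (abs_nonneg _).trans (hM 0 0 hT0)
  set w := picardTerm d σ T V h with hw
  set a : ℕ → ℝ := fun n => M * ((C * T) ^ n / n.factorial) with ha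
  have ha0 : ∀ n, 0 ≤ a n := fun n => by positivity
  have hsum : Summable a := (Real.summable_pow_div_factorial (C * T)).mul_left M
  have hwm : ∀ n, Measurable (Function.uncurry (w n)) := measurable_picardTerm hV hh
  have hwa : ∀ n x t, ‖w n x t‖ ≤ a n := fun n x t => by
    by_cases ht : t ∈ Icc 0 T
    · refine (picardTerm_bound hd hσ hV hh hC hM n x t ht).trans ?_
      have := ht.1
      have := ht.2
      simp only [ha]
      gcongr
    · rw [hw, picardTerm_eq_zero h0 n x ht, norm_zero]; exact ha0 n
  have hws : ∀ x t, Summable fun n => w n x t := fun x t =>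
    Summable.of_norm_bounded hsum fun n => hwa n x t
  have hum : Measurable (Function.uncurry fun x t => ∑' n, w n x t) :=
    measurable_of_tendsto_metrizable
      (f := fun N (p : E × ℝ) => ∑ n ∈ Finset.range N, w n p.1 p.2)
      (fun N => Finset.measurable_fun_sum _ fun n _ => hwm n)
      (tendsto_pi_nhds.2 fun p => (hws p.1 p.2).hasSum.tendsto_sum_nat)
  -- The tails of the majorant bound the distance to the partial sums uniformly.
  have htail : ∀ N x t, |(∑' n, w n x t) - ∑ n ∈ Finset.range N, w n x t| ≤ ∑' n, a (n + N) := by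
    intro N x t
    rw [← (hws x t).sum_add_tsum_nat_add N, add_sub_cancel_left]
    exact tsum_of_norm_bounded ((summable_nat_add_iff N).2 hsum).hasSum fun n => hwa _ x t
  have hε : Tendsto (fun N => ∑' n, a (n + N)) atTop (𝓝 0) := tendsto_sum_nat_add a
  have hub : ∀ x t, |∑' n, w n x t| ≤ ∑' n, a n := fun x t =>
    tsum_of_norm_bounded hsum.hasSum fun n => hwa n x t
  refine ⟨fun x t => ∑' n, w n x t, hum, ⟨_, fun x t _ => hub x t⟩, fun x t ht => ?_⟩
  have h1 : Tendsto (fun N => ∑ n ∈ Finset.range (N + 1), w n x t) atTop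
      (𝓝 (∑' n, w n x t)) := (hws x t).hasSum.tendsto_sum_nat.comp (tendsto_add_atTop_nat 1)
  refine tendsto_nhds_unique h1 ?_
  have h2 : ∀ N, ∑ n ∈ Finset.range (N + 1), w n x t = h x t + duhamel d σ
      (fun y s => V y s * ∑ n ∈ Finset.range N, w n y s) x t := fun N =>
    duhamel_partialSum hd hσ hV hh hC (fun n x t _ => hwa n x t) N x ht
  simp_rw [h2]
  refine tendsto_const_nhds.add ?_
  rw [tendsto_iff_norm_sub_tendsto_zero]
  refine squeeze_zero (g := fun N => C * (∑' n, a (n + N)) * t) (fun _ => norm_nonneg _)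
    (fun N => ?_) (by simpa using (hε.const_mul C).mul_const t)
  have hSm : Measurable (Function.uncurry fun y s => V y s * ∑ n ∈ Finset.range N, w n y s) :=
    hV.mul (Finset.measurable_fun_sum _ fun n _ => hwm n)
  have hSb : ∀ y, ∀ s ∈ Icc 0 T, |V y s * ∑ n ∈ Finset.range N, w n y s| ≤
      C * ∑ n ∈ Finset.range N, a n := fun y s hs => by
    rw [abs_mul]
    refine mul_le_mul (hC y s hs) ?_ (abs_nonneg _) hC0
    exact (Finset.abs_sum_le_sum_abs _ _).trans (Finset.sum_le_sum fun n _ => hwa n y s)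
  have hVu : Measurable (Function.uncurry fun y s => V y s * ∑' n, w n y s) := hV.mul hum
  have hVub : ∀ y, ∀ s ∈ Icc 0 T, |V y s * ∑' n, w n y s| ≤ C * ∑' n, a n := fun y s hs => by
    rw [abs_mul]
    exact mul_le_mul (hC y s hs) (hub y s) (abs_nonneg _) hC0
  rw [norm_sub_rev, ← duhamel_sub hd hσ hVu hSm hVub hSb x ht]
  have := (duhamel_bound (n := 0) (A := C * ∑' n, a (n + N)) (T := T) hd hσ
    (f := fun y s => V y s * (∑' n, w n y s) - V y s * ∑ n ∈ Finset.range N, w n y s)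
    (hVu.sub hSm)
    (fun y s hs => ?_) x ht).2
  · simpa using this
  · simp only [← mul_sub, abs_mul, pow_zero, mul_one]
    exact mul_le_mul (hC y s hs) (htail N y s) (abs_nonneg _) hC0

/-! ### Uniqueness -/

/-- Two bounded solutions of `u = h + duhamel (V u)` agree: their difference is bounded by
`R (C t)ⁿ / n!` for every `n`. -/
lemma fixedPoint_unique (hd : 1 ≤ d) (hσ : 0 < σ) {T : ℝ} {V h u v : E → ℝ → ℝ}
    (hV : Measurable (Function.uncurry V))
    {C : ℝ} (hC : ∀ x, ∀ t ∈ Icc 0 T, |V x t| ≤ C)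
    (hum : Measurable (Function.uncurry u)) (hvm : Measurable (Function.uncurry v))
    {A B : ℝ} (hA : ∀ x, ∀ t ∈ Icc 0 T, |u x t| ≤ A) (hB : ∀ x, ∀ t ∈ Icc 0 T, |v x t| ≤ B)
    (hu : ∀ x, ∀ t ∈ Icc 0 T, u x t = h x t + duhamel d σ (fun y s => V y s * u y s) x t)
    (hv : ∀ x, ∀ t ∈ Icc 0 T, v x t = h x t + duhamel d σ (fun y s => V y s * v y s) x t)
    (x : E) {t : ℝ} (ht : t ∈ Icc 0 T) : v x t = u x t := by
  have hbd : ∀ {z : E → ℝ → ℝ} {D : ℝ}, (∀ x, ∀ t ∈ Icc 0 T, |z x t| ≤ D) →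
      ∀ x, ∀ t ∈ Icc 0 T, |V x t * z x t| ≤ C * D := fun hz x t ht => by
    rw [abs_mul]
    exact mul_le_mul (hC x t ht) (hz x t ht) (abs_nonneg _) ((abs_nonneg _).trans (hC x t ht))
  have hdiff : ∀ x, ∀ t ∈ Icc 0 T, v x t - u x t =
      duhamel d σ (fun y s => V y s * (v y s - u y s)) x t := fun x t ht => by
    have := duhamel_sub hd hσ (f := fun y s => V y s * v y s) (g := fun y s => V y s * u y s)
      (hV.mul hvm) (hV.mul hum) (hbd hB) (hbd hA) x ht
    simp only [← mul_sub] at this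
    rw [this, hu x t ht, hv x t ht]; ring
  have key : ∀ n : ℕ, ∀ x, ∀ t ∈ Icc 0 T,
      |v x t - u x t| ≤ (B + A) * ((C * t) ^ n / n.factorial) := by
    intro n
    induction n with
    | zero =>
      intro x t ht
      simpa using (abs_sub _ _).trans (add_le_add (hB x t ht) (hA x t ht))
    | succ n ih =>
      intro x t ht
      rw [hdiff x t ht]
      exact duhamel_step hd hσ hV hC (w := fun y s => v y s - u y s) (hvm.sub hum) ih x ht
  have hlim : Tendsto (fun n : ℕ => (B + A) * ((C * t) ^ n / n.factorial)) atTop (𝓝 0) := by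
    simpa using (FloorSemiring.tendsto_pow_div_factorial_atTop (C * t)).const_mul (B + A)
  have := ge_of_tendsto' hlim fun n => key n x t ht
  exact sub_eq_zero.1 (abs_eq_zero.1 (le_antisymm this (abs_nonneg _)))

/-! ### The free evolution and the mild formulation -/

/-- The free evolution `G_t * u₀` on `(0, T]`, equal to `u₀` at `t = 0`, and to `0` for
`t ∉ [0, T]`. -/
noncomputable def freeEvolution (d : ℕ) (σ T : ℝ) (u₀ : EuclideanSpace ℝ (Fin d) → ℝ)
    (x : EuclideanSpace ℝ (Fin d)) (t : ℝ) : ℝ :=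
  if t ∈ Ioc 0 T then ∫ y, heatKernel d σ t (x - y) * u₀ y else if t = 0 then u₀ x else 0

lemma measurable_freeEvolution {T : ℝ} {u₀ : E → ℝ} (hu : Measurable u₀) :
    Measurable (Function.uncurry (freeEvolution d σ T u₀)) := by
  refine Measurable.ite (p := fun p : E × ℝ => p.2 ∈ Ioc 0 T)
    (measurable_snd measurableSet_Ioc) ?_ ?_
  · -- This is the inner integral of `duhamel` at `s = 0`.
    have := (measurable_inner (σ := σ) (f := fun y _ => u₀ y) (hu.comp measurable_fst)).comp
      (f := fun p : E × ℝ => (p, (0 : ℝ))) (by fun_prop)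
    simpa [Function.comp_def] using this
  · exact Measurable.ite (p := fun p : E × ℝ => p.2 = 0)
      (measurable_snd (measurableSet_singleton 0)) (hu.comp measurable_fst) measurable_const

lemma freeEvolution_bound (hd : 1 ≤ d) (hσ : 0 < σ) {T : ℝ} {u₀ : E → ℝ} (hu : Measurable u₀)
    {M : ℝ} (hM : ∀ x, |u₀ x| ≤ M) (x : E) (t : ℝ) : |freeEvolution d σ T u₀ x t| ≤ M := by
  unfold freeEvolution
  split_ifs with h1 h2
  · exact (conv_bound hd hσ h1.1.le hu hM x).2
  · exact hM x
  · simpa using (abs_nonneg _).trans (hM x)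

/-- The initial condition and the mild formulation together are the single fixed point equation
`u = freeEvolution + duhamel (V u)` on `[0, T]`. -/
lemma mild_iff {T : ℝ} (hT : 0 < T) {V u : E → ℝ → ℝ} {u₀ : E → ℝ} :
    ((∀ x, u x 0 = u₀ x) ∧ (∀ x, ∀ t ∈ Ioc (0 : ℝ) T,
      u x t = (∫ y : E, heatKernel d σ t (x - y) * u₀ y)
        + ∫ s in (0 : ℝ)..t, ∫ y : E, heatKernel d σ (t - s) (x - y) * V y s * u y s)) ↔
    ∀ x, ∀ t ∈ Icc 0 T, u x t = freeEvolution d σ T u₀ x t +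
      duhamel d σ (fun y s => V y s * u y s) x t := by
  simp only [duhamel, mul_assoc]
  constructor
  · rintro ⟨h0, h⟩ x t ht
    rcases ht.1.eq_or_lt with rfl | hpos
    · simp [freeEvolution, h0]
    · rw [freeEvolution, if_pos ⟨hpos, ht.2⟩]
      exact h x t ⟨hpos, ht.2⟩
  · intro h
    refine ⟨fun x => ?_, fun x t ht => ?_⟩
    · simpa [freeEvolution] using h x 0 ⟨le_rfl, hT.le⟩
    · have := h x t ⟨ht.1.le, ht.2⟩
      rwa [freeEvolution, if_pos ht] at this

end HeatMild

open HeatMild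

/-- Existence and uniqueness of a bounded measurable mild (Duhamel) solution of
the heat equation with bounded measurable potential `V` and bounded continuous
initial data `u₀` on `ℝ^d × [0,T]`. -/
theorem heat_equation_mild_solution_exists_unique
    (d : ℕ) (hd : 1 ≤ d) (T σ : ℝ) (hT : 0 < T) (hσ : 0 < σ)
    (V : EuclideanSpace ℝ (Fin d) → ℝ → ℝ)
    (hVmeas : Measurable (Function.uncurry V))
    (hVbdd : ∃ C : ℝ, ∀ x, ∀ t ∈ Set.Icc (0 : ℝ) T, |V x t| ≤ C)
    (u₀ : EuclideanSpace ℝ (Fin d) → ℝ)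
    (hu₀cont : Continuous u₀) (hu₀bdd : ∃ C : ℝ, ∀ x, |u₀ x| ≤ C) :
    ∃ u : EuclideanSpace ℝ (Fin d) → ℝ → ℝ,
      (Measurable (Function.uncurry u) ∧
        (∃ C : ℝ, ∀ x, ∀ t ∈ Set.Icc (0 : ℝ) T, |u x t| ≤ C) ∧
        (∀ x, u x 0 = u₀ x) ∧
        (∀ x, ∀ t ∈ Set.Ioc (0 : ℝ) T,
          u x t = (∫ y : EuclideanSpace ℝ (Fin d), heatKernel d σ t (x - y) * u₀ y)
            + ∫ s in (0 : ℝ)..t, ∫ y : EuclideanSpace ℝ (Fin d),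
                heatKernel d σ (t - s) (x - y) * V y s * u y s)) ∧
      ∀ v : EuclideanSpace ℝ (Fin d) → ℝ → ℝ,
        (Measurable (Function.uncurry v) ∧
          (∃ C : ℝ, ∀ x, ∀ t ∈ Set.Icc (0 : ℝ) T, |v x t| ≤ C) ∧
          (∀ x, v x 0 = u₀ x) ∧
          (∀ x, ∀ t ∈ Set.Ioc (0 : ℝ) T,
            v x t = (∫ y : EuclideanSpace ℝ (Fin d), heatKernel d σ t (x - y) * u₀ y)
              + ∫ s in (0 : ℝ)..t, ∫ y : EuclideanSpace ℝ (Fin d),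
                  heatKernel d σ (t - s) (x - y) * V y s * v y s)) →
        ∀ x, ∀ t ∈ Set.Icc (0 : ℝ) T, v x t = u x t := by
  obtain ⟨C, hC⟩ := hVbdd
  obtain ⟨M, hM⟩ := hu₀bdd
  have hm := hu₀cont.measurable
  obtain ⟨u, hum, ⟨A, hA⟩, hu⟩ := exists_fixedPoint hd hσ hT hVmeas
    (measurable_freeEvolution (σ := σ) (T := T) hm) hC
    (fun x t _ => freeEvolution_bound hd hσ hm hM x t)
    (fun x t ht => by
      rw [freeEvolution, if_neg fun h => ht ⟨h.1.le, h.2⟩, if_neg]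
      rintro rfl
      exact ht ⟨le_rfl, hT.le⟩)
  refine ⟨u, ⟨hum, ⟨A, hA⟩, (mild_iff hT).2 hu⟩, ?_⟩
  rintro v ⟨hvm, ⟨B, hB⟩, hv⟩ x t ht
  exact fixedPoint_unique hd hσ hVmeas hC hum hvm hA hB hu ((mild_iff hT).1 hv) x ht
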